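/- For all natural numbers n and ℓ, K₃(n,ℓ,0) = K(n,ℓ). -/

import Mathlib

open Classical in
/-- The array `K n ℓ`: base cases (taking precedence) `K n 0 = 1` if `n = 2^r - 1` and `0`
otherwise; `K s t = 0` for `t ≥ s > 0`; `K s (s-1) = 1` for `s > 1`; otherwise
`K (2n) ℓ = (1/2) · ∑_{k=0}^{2n-1} ∑_{v=0}^{ℓ-1} K k v · K (2n-1-k) (ℓ-1-v)`,
`K (2n+1) (2ℓ) = K n ℓ + (1/2) · ∑_{k=0}^{2n} ∑_{v=0}^{2ℓ-1} K k v · K (2n-k) (2ℓ-1-v)` and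
`K (2n+1) (2ℓ+1) = (1/2) · (-K n ℓ + ∑_{k=0}^{2n} ∑_{v=0}^{2ℓ} K k v · K (2n-k) (2ℓ-v))`. -/
noncomputable def K : ℕ → ℕ → ℚ
  | n, l =>
    if l = 0 then (if ∃ r : ℕ, n = 2 ^ r - 1 then 1 else 0)
    else if 0 < n ∧ n ≤ l then 0
    else if 1 < n ∧ l = n - 1 then 1
    else if h : n % 2 = 0 then
      (1 / 2) * ∑ k ∈ (Finset.range n).attach, ∑ v ∈ Finset.range l,
        K k.1 v * K (n - 1 - k.1) (l - 1 - v)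
    else if l % 2 = 0 then
      K (n / 2) (l / 2) + (1 / 2) * ∑ k ∈ (Finset.range n).attach, ∑ v ∈ Finset.range l,
        K k.1 v * K (n - 1 - k.1) (l - 1 - v)
    else
      (1 / 2) * (- K (n / 2) (l / 2) + ∑ k ∈ (Finset.range n).attach, ∑ v ∈ Finset.range l,
        K k.1 v * K (n - 1 - k.1) (l - 1 - v))
termination_by n l => n
decreasing_by
  · have := Finset.mem_range.mp k.2; omega
  · have := Finset.mem_range.mp k.2; omega
  · omega
  · have := Finset.mem_range.mp k.2; omega
  · have := Finset.mem_range.mp k.2; omega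
  · omega
  · have := Finset.mem_range.mp k.2; omega
  · have := Finset.mem_range.mp k.2; omega

open Classical in
/-- The array `K3 n ℓ c`: base cases (taking precedence) `K3 0 0 0 = 1`; `K3 n ℓ c = 0`
whenever `ℓ ≥ n > 0` or `c > n`; `K3 n (n-1) c = C(n,c)` for `n ≥ 1` and `0 ≤ c ≤ n`;
`K3 n 0 c = 1` if `n = 2^r - 1` for some `r ≥ 1` and `0 ≤ c ≤ n`, and `K3 n 0 c = 0` for
other `n ≥ 1`; otherwise, for `p, q, r ∈ {0,1}`,
`K3 (2n+p) (2ℓ+q) (2c+r) = p·(-1/2)^q·K3 n ℓ c + (1/2) · ∑_{δ=0, δ≤2c+r}^{1} ∑_{k=0}^{2n+p-1}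
∑_{v=0}^{2ℓ+q-1} ∑_{m=0}^{2c+r-δ} K3 k v m · K3 (2n+p-1-k) (2ℓ+q-1-v) (2c+r-δ-m)`. -/
noncomputable def K3 : ℕ → ℕ → ℕ → ℚ
  | 0, l, c => if l = 0 ∧ c = 0 then 1 else 0
  | n + 1, l, c =>
    if n + 1 ≤ l ∨ n + 1 < c then 0
    else if l = n then ((n + 1).choose c : ℚ)
    else if l = 0 then (if ∃ r : ℕ, 1 ≤ r ∧ n + 1 = 2 ^ r - 1 then 1 else 0)
    else
      (if (n + 1) % 2 = 1 then ((-1 : ℚ) / 2) ^ (l % 2) * K3 ((n + 1) / 2) (l / 2) (c / 2)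
        else 0)
      + (1 / 2) * ∑ δ ∈ Finset.range 2, if δ ≤ c then
          (∑ k ∈ (Finset.range (n + 1)).attach, ∑ v ∈ Finset.range l,
            ∑ m ∈ Finset.range (c - δ + 1),
              K3 k.1 v m * K3 (n - k.1) (l - 1 - v) (c - δ - m)) else 0
termination_by n l c => n
decreasing_by
  · omega
  · have := Finset.mem_range.mp k.2; omega
  · omega

/-!
The three cases of the recurrence for `K` are one: `K n ℓ` is half the self-convolution of `K` at
`(n - 1, ℓ - 1)` plus, for odd `n`, the correction `(-1/2) ^ (ℓ % 2) * K (n / 2) (ℓ / 2)`. At color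
`0` the recurrence for `K3` is the same, since only `δ = 0` and `m = 0` contribute to its sum. Hence
`K` and the color-`0` slice of `K3` solve one recurrence with the same boundary values, and its
solution is unique.
-/

open Finset

/-- The coefficient of `x ^ n * y ^ ℓ` in the square of the bivariate generating function of `f`. -/
def selfConvolution {R : Type*} [NonUnitalNonAssocSemiring R] (f : ℕ → ℕ → R) (n ℓ : ℕ) : R :=
  ∑ p ∈ antidiagonal n, ∑ q ∈ antidiagonal ℓ, f p.1 q.1 * f p.2 q.2

/-- The boundary values and the recurrence that characterize `K`. The two indices of the
recurrence are shifted by one, so that no truncated subtraction occurs. -/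
structure IsKArray {R : Type*} [DivisionRing R] (f : ℕ → ℕ → R) : Prop where
  two_pow_sub_one_zero (r : ℕ) : f (2 ^ r - 1) 0 = 1
  zero_right_of_ne_two_pow_sub_one {n : ℕ} (hn : ∀ r, n ≠ 2 ^ r - 1) : f n 0 = 0
  eq_zero_of_le {n ℓ : ℕ} (hℓ : 0 < ℓ) (hn : n ≤ ℓ) : f n ℓ = 0
  succ_self (n : ℕ) : f (n + 1) n = 1
  succ_succ {n ℓ : ℕ} (h : ℓ + 1 < n) : f (n + 1) (ℓ + 1) =
    (if Odd (n + 1) then (-1 / 2) ^ ((ℓ + 1) % 2) * f ((n + 1) / 2) ((ℓ + 1) / 2) else 0) +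
      1 / 2 * selfConvolution f n ℓ

theorem sum_attach_range_succ_eq_sum_antidiagonal {M : Type*} [AddCommMonoid M]
    (F : ℕ → ℕ → ℕ → ℕ → M) (n ℓ : ℕ) :
    ∑ k ∈ (range (n + 1)).attach, ∑ v ∈ range (ℓ + 1), F k (n - k) v (ℓ - v) =
      ∑ p ∈ antidiagonal n, ∑ q ∈ antidiagonal ℓ, F p.1 p.2 q.1 q.2 := by
  rw [sum_attach (range (n + 1)) fun k => ∑ v ∈ range (ℓ + 1), F k (n - k) v (ℓ - v),
    Nat.sum_antidiagonal_eq_sum_range_succ fun i j => ∑ q ∈ antidiagonal ℓ, F i j q.1 q.2]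
  exact sum_congr rfl fun k _ =>
    (Nat.sum_antidiagonal_eq_sum_range_succ (F k (n - k)) ℓ).symm

theorem selfConvolution_congr {R : Type*} [NonUnitalNonAssocSemiring R] {f g : ℕ → ℕ → R} {n : ℕ}
    (h : ∀ k ≤ n, f k = g k) (ℓ : ℕ) : selfConvolution f n ℓ = selfConvolution g n ℓ :=
  sum_congr rfl fun p hp => by
    rw [h p.1 (HasAntidiagonal.antidiagonal.fst_le hp),
      h p.2 (HasAntidiagonal.antidiagonal.snd_le hp)]

theorem IsKArray.unique {R : Type*} [DivisionRing R] {f g : ℕ → ℕ → R}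
    (hf : IsKArray f) (hg : IsKArray g) : f = g := by
  ext n ℓ
  induction n using Nat.strong_induction_on generalizing ℓ with
  | _ n ih =>
  rcases ℓ with _ | ℓ
  · by_cases hn : ∃ r, n = 2 ^ r - 1
    · obtain ⟨r, rfl⟩ := hn
      rw [hf.two_pow_sub_one_zero, hg.two_pow_sub_one_zero]
    · push Not at hn
      rw [hf.zero_right_of_ne_two_pow_sub_one hn,
        hg.zero_right_of_ne_two_pow_sub_one hn]
  · obtain hn | rfl | hn := lt_trichotomy n (ℓ + 1 + 1)
    · rw [hf.eq_zero_of_le ℓ.succ_pos (Nat.le_of_lt_succ hn),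
        hg.eq_zero_of_le ℓ.succ_pos (Nat.le_of_lt_succ hn)]
    · rw [hf.succ_self, hg.succ_self]
    · obtain ⟨n, rfl⟩ := Nat.exists_eq_add_one_of_ne_zero (Nat.ne_zero_of_lt hn)
      have hconv : selfConvolution f n ℓ = selfConvolution g n ℓ :=
        selfConvolution_congr (fun k hk => funext (ih k (Nat.lt_succ_of_le hk))) ℓ
      rw [hf.succ_succ (Nat.lt_of_succ_lt_succ hn), hg.succ_succ (Nat.lt_of_succ_lt_succ hn),
        hconv, ih _ (by omega)]

theorem K_two_pow_sub_one_zero (r : ℕ) : K (2 ^ r - 1) 0 = 1 := by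
  rw [K, if_pos rfl, if_pos ⟨r, rfl⟩]

theorem K_zero_right_of_ne_two_pow_sub_one {n : ℕ} (hn : ∀ r, n ≠ 2 ^ r - 1) : K n 0 = 0 := by
  rw [K, if_pos rfl, if_neg (not_exists.mpr hn)]

theorem K_eq_zero_of_le {n ℓ : ℕ} (hℓ : 0 < ℓ) (hn : n ≤ ℓ) : K n ℓ = 0 := by
  rw [K, if_neg hℓ.ne']
  rcases n.eq_zero_or_pos with rfl | hpos
  · simp
  · rw [if_pos ⟨hpos, hn⟩]

theorem K_succ_self (n : ℕ) : K (n + 1) n = 1 := by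
  rcases n.eq_zero_or_pos with rfl | hn
  · exact K_two_pow_sub_one_zero 1
  · rw [K, if_neg hn.ne', if_neg (by omega), if_pos (by omega)]

theorem K_succ_succ {n ℓ : ℕ} (h : ℓ + 1 < n) : K (n + 1) (ℓ + 1) =
    (if Odd (n + 1) then (-1 / 2) ^ ((ℓ + 1) % 2) * K ((n + 1) / 2) ((ℓ + 1) / 2) else 0) +
      1 / 2 * selfConvolution K n ℓ := by
  rw [K, if_neg ℓ.succ_ne_zero, if_neg (by omega), if_neg (by omega)]
  simp only [Nat.add_sub_cancel]
  rw [sum_attach_range_succ_eq_sum_antidiagonal fun i j v w => K i v * K j w, ← selfConvolution]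
  rcases Nat.mod_two_eq_zero_or_one (n + 1) with hn | hn
  · rw [dif_pos hn, if_neg (by rwa [Nat.not_odd_iff]), zero_add]
  · rw [dif_neg (by omega), if_pos (Nat.odd_iff.mpr hn)]
    rcases Nat.mod_two_eq_zero_or_one (ℓ + 1) with hℓ | hℓ
    · rw [if_pos hℓ, hℓ, pow_zero, one_mul]
    · rw [if_neg (by omega), hℓ]
      ring

theorem isKArray_K : IsKArray K where
  two_pow_sub_one_zero := K_two_pow_sub_one_zero
  zero_right_of_ne_two_pow_sub_one := K_zero_right_of_ne_two_pow_sub_one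
  eq_zero_of_le := K_eq_zero_of_le
  succ_self := K_succ_self
  succ_succ := K_succ_succ

theorem K3_succ_self (n c : ℕ) : K3 (n + 1) n c = (n + 1).choose c := by
  rw [K3]
  by_cases hc : n + 1 < c
  · rw [if_pos (Or.inr hc), Nat.choose_eq_zero_of_lt hc, Nat.cast_zero]
  · rw [if_neg (by omega), if_pos rfl]

theorem K3_two_pow_sub_one_zero {r c : ℕ} (hc : c ≤ 2 ^ r - 1) : K3 (2 ^ r - 1) 0 c = 1 := by
  rcases hn : 2 ^ r - 1 with _ | _ | n
  · rw [K3, if_pos ⟨rfl, by omega⟩]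
  · obtain rfl | rfl : c = 0 ∨ c = 1 := by omega
    all_goals simp [K3_succ_self]
  · have hr : 1 ≤ r := Nat.one_le_iff_ne_zero.mpr (by rintro rfl; simp at hn)
    rw [K3, if_neg (by omega), if_neg (by omega), if_pos rfl, if_pos ⟨r, hr, hn.symm⟩]

theorem K3_zero_right_of_ne_two_pow_sub_one {n : ℕ} (hn : ∀ r, n ≠ 2 ^ r - 1) (c : ℕ) :
    K3 n 0 c = 0 := by
  rcases n with _ | _ | n
  · exact absurd rfl (hn 0)
  · exact absurd rfl (hn 1)
  · have hn' : ¬∃ r, 1 ≤ r ∧ n + 1 + 1 = 2 ^ r - 1 := fun ⟨r, _, h⟩ => hn r h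
    rw [K3, if_neg n.succ_ne_zero.symm, if_pos rfl, if_neg hn', ite_self]

theorem K3_eq_zero_of_le {n ℓ : ℕ} (hℓ : 0 < ℓ) (hn : n ≤ ℓ) (c : ℕ) : K3 n ℓ c = 0 := by
  rcases n with _ | n
  · rw [K3, if_neg fun h => hℓ.ne' h.1]
  · rw [K3, if_pos (Or.inl hn)]

theorem K3_succ_succ {n ℓ c : ℕ} (h : ℓ + 1 < n) (hc : c ≤ n + 1) : K3 (n + 1) (ℓ + 1) c =
    (if Odd (n + 1) then
      (-1 / 2) ^ ((ℓ + 1) % 2) * K3 ((n + 1) / 2) ((ℓ + 1) / 2) (c / 2) else 0) +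
      1 / 2 * ∑ δ ∈ range 2, if δ ≤ c then
        ∑ p ∈ antidiagonal n, ∑ q ∈ antidiagonal ℓ, ∑ m ∈ antidiagonal (c - δ),
          K3 p.1 q.1 m.1 * K3 p.2 q.2 m.2 else 0 := by
  have hsum (d : ℕ) :
      ∑ k ∈ (range (n + 1)).attach, ∑ v ∈ range (ℓ + 1), ∑ m ∈ range (d + 1),
        K3 k v m * K3 (n - k) (ℓ - v) (d - m) =
      ∑ p ∈ antidiagonal n, ∑ q ∈ antidiagonal ℓ, ∑ m ∈ antidiagonal d,
        K3 p.1 q.1 m.1 * K3 p.2 q.2 m.2 := by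
    simp only [Nat.sum_antidiagonal_eq_sum_range_succ_mk _ d]
    exact sum_attach_range_succ_eq_sum_antidiagonal
      (fun i j v w => ∑ m ∈ range (d + 1), K3 i v m * K3 j w (d - m)) n ℓ
  rw [K3, if_neg (by omega), if_neg (by omega), if_neg ℓ.succ_ne_zero]
  simp only [Nat.add_sub_cancel, Nat.odd_iff, hsum]

theorem K3_zero_color_succ_succ {n ℓ : ℕ} (h : ℓ + 1 < n) : K3 (n + 1) (ℓ + 1) 0 =
    (if Odd (n + 1) then (-1 / 2) ^ ((ℓ + 1) % 2) * K3 ((n + 1) / 2) ((ℓ + 1) / 2) 0 else 0) +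
      1 / 2 * selfConvolution (K3 · · 0) n ℓ := by
  rw [K3_succ_succ h (Nat.zero_le _)]
  simp [selfConvolution]

theorem isKArray_K3_zero_color : IsKArray (K3 · · 0) where
  two_pow_sub_one_zero _ := K3_two_pow_sub_one_zero (Nat.zero_le _)
  zero_right_of_ne_two_pow_sub_one hn := K3_zero_right_of_ne_two_pow_sub_one hn 0
  eq_zero_of_le hℓ hn := K3_eq_zero_of_le hℓ hn 0
  succ_self n := by rw [K3_succ_self, Nat.choose_zero_right, Nat.cast_one]
  succ_succ := K3_zero_color_succ_succ

/-- For all natural numbers `n` and `ℓ`, `K3 n ℓ 0 = K n ℓ`. -/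
theorem K3_zero_color_eq_K (n ℓ : ℕ) : K3 n ℓ 0 = K n ℓ :=
  congr_fun₂ (isKArray_K3_zero_color.unique isKArray_K) n ℓ
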